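/- Fix a constant c > 0. For each n, let I^{⌊cn⌋}_n be the number of inversions of the random permutation of [n] obtained by performing r = ⌊cn⌋ iterated random-to-top shuffles starting from the identity. Then (I^{⌊cn⌋}_n − n²(1 − e^{−2c})/4) / n^{3/2} converges in distribution, as n → ∞, to a centered normal random variable with variance (1 + 8e^{−3c} − 9(1+c)e^{−4c}) / 36. -/

import Mathlib

open MeasureTheory ProbabilityTheory Filter Finset Topology
open scoped NNReal

/-- Move card `c` to the top (position `0`) of the deck `π`
(where `π i` is the card in position `i`). -/
def moveToTop {n : ℕ} (c : Fin n) (π : Equiv.Perm (Fin n)) : Equiv.Perm (Fin n) :=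
  π * ((π⁻¹ c).cycleRange)⁻¹

/-- The permutation (position `i` ↦ card in position `i`) obtained after performing
iterated random-to-top moves with selected cards `s 0, s 1, …`, starting from the
identity deck `(1, 2, …, n)`. -/
def rttPerm (n r : ℕ) (s : Fin r → Fin n) : Equiv.Perm (Fin n) :=
  (List.ofFn s).foldl (fun π c => moveToTop c π) 1

/-- Number of fixed points of a permutation. -/
def fixedPointCount {n : ℕ} (π : Equiv.Perm (Fin n)) : ℕ :=
  (Finset.univ.filter fun i => π i = i).card

/-- Number of descents of a permutation. -/
def descentCount {n : ℕ} (π : Equiv.Perm (Fin n)) : ℕ :=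
  (Finset.univ.filter fun p : Fin n × Fin n =>
    (p.1 : ℕ) + 1 = (p.2 : ℕ) ∧ π p.2 < π p.1).card

/-- Number of inversions of a permutation. -/
def inversionCount {n : ℕ} (π : Equiv.Perm (Fin n)) : ℕ :=
  (Finset.univ.filter fun p : Fin n × Fin n => p.1 < p.2 ∧ π p.2 < π p.1).card

/-- The number of distinct values among `s 0, …, s (r-1)` (the occupancy count `K^r_n`). -/
def distinctCount (n r : ℕ) (s : Fin r → Fin n) : ℕ :=
  (Finset.univ.image s).card

/-- Probability of the event `p` under the uniform distribution on the finite type `α`. -/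
noncomputable def unifProb {α : Type*} [Fintype α] (p : α → Prop) : ℝ :=
  (Nat.card {x : α // p x} : ℝ) / (Fintype.card α : ℝ)

/-- Expectation of `f` under the uniform distribution on the finite type `α`. -/
noncomputable def unifExpect {α : Type*} [Fintype α] (f : α → ℝ) : ℝ :=
  (∑ x, f x) / (Fintype.card α : ℝ)

/-- Variance of `f` under the uniform distribution on the finite type `α`. -/
noncomputable def unifVar {α : Type*} [Fintype α] (f : α → ℝ) : ℝ :=
  unifExpect fun x => (f x - unifExpect f) ^ 2

/-- `max_{1 ≤ i ≤ k} π(i)`: the maximum card value (in `{1, …, n}`, i.e. `val + 1`)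
among the first `k` positions of `π`. -/
def maxFirst (n k : ℕ) (π : Equiv.Perm (Fin n)) : ℕ :=
  (Finset.univ.filter fun i : Fin n => (i : ℕ) < k).sup fun i => (π i : ℕ) + 1

/-- The number of fixed points among the first `k` positions of `π`. -/
def fixedFirst (n k : ℕ) (π : Equiv.Perm (Fin n)) : ℕ :=
  (Finset.univ.filter fun i : Fin n => (i : ℕ) < k ∧ π i = i).card

section Combinatorics

/-- inverted pairs of cards, both outside `A` -/
def invOut {n : ℕ} (A : Finset (Fin n)) (π : Equiv.Perm (Fin n)) : ℕ :=
  (Finset.univ.filter fun p : Fin n × Fin n =>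
    p.1 ∉ A ∧ p.2 ∉ A ∧ p.1 < p.2 ∧ π⁻¹ p.2 < π⁻¹ p.1).card

lemma inversionCount_eq_invOut {n : ℕ} (π : Equiv.Perm (Fin n)) :
    inversionCount π = invOut ∅ π := by
  unfold inversionCount invOut
  refine Finset.card_bij' (fun p _ => (π p.2, π p.1)) (fun p _ => (π⁻¹ p.2, π⁻¹ p.1))
    ?_ ?_ ?_ ?_ <;> simp +contextual

lemma invOut_one {n : ℕ} (A : Finset (Fin n)) : invOut A 1 = 0 := by
  unfold invOut
  rw [Finset.card_eq_zero, Finset.filter_eq_empty_iff]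
  rintro ⟨a, b⟩ _ ⟨_, _, h1, h2⟩
  simp at h1 h2
  exact absurd h1 (not_lt.mpr h2.le)

lemma moveToTop_inv_apply {n : ℕ} (c : Fin n) (π : Equiv.Perm (Fin n)) (x : Fin n) :
    (moveToTop c π)⁻¹ x = (π⁻¹ c).cycleRange (π⁻¹ x) := by
  simp [moveToTop, mul_inv_rev]

lemma cycleRange_lt_iff {n : ℕ} (i a b : Fin n) (ha : a ≠ i) (hb : b ≠ i) :
    i.cycleRange a < i.cycleRange b ↔ a < b := by
  have key : ∀ x : Fin n, x ≠ i → ((i.cycleRange x : Fin n) : ℕ) = if (x : ℕ) < i then (x : ℕ) + 1 else x := by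
    intro x hx
    split_ifs with h
    · exact Fin.coe_cycleRange_of_lt h
    · have : i < x := lt_of_le_of_ne (not_lt.mp h) (Ne.symm hx)
      rw [Fin.cycleRange_of_gt this]
  rw [Fin.lt_def, Fin.lt_def, key a ha, key b hb]
  have ha' : (a : ℕ) ≠ i := fun h => ha (Fin.ext h)
  have hb' : (b : ℕ) ≠ i := fun h => hb (Fin.ext h)
  split_ifs <;> omega

lemma cycleRange_self_lt {n : ℕ} (i a : Fin n) (ha : a ≠ i) :
    i.cycleRange i < i.cycleRange a := by
  have : NeZero n := ⟨by rintro rfl; exact i.elim0⟩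
  have h0 : i.cycleRange i = 0 := Fin.cycleRange_self i
  rw [h0]
  refine (Fin.pos_iff_ne_zero).mpr ?_
  intro h
  exact ha (i.cycleRange.injective (h.trans h0.symm))

lemma invOut_moveToTop_mem {n : ℕ} (A : Finset (Fin n)) (π : Equiv.Perm (Fin n)) (u : Fin n)
    (hu : u ∈ A) : invOut A (moveToTop u π) = invOut A π := by
  unfold invOut
  congr 1
  refine Finset.filter_congr ?_
  rintro ⟨a, b⟩ _
  simp only [moveToTop_inv_apply]
  refine and_congr_right fun ha => and_congr_right fun hb => and_congr_right fun _ => ?_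
  apply cycleRange_lt_iff
  · intro h; exact hb (π⁻¹.injective h ▸ hu)
  · intro h; exact ha (π⁻¹.injective h ▸ hu)

lemma invOut_moveToTop_notMem {n : ℕ} (A : Finset (Fin n)) (π : Equiv.Perm (Fin n)) (u : Fin n)
    (hu : u ∉ A) : invOut A (moveToTop u π)
      = ((Aᶜ).filter fun a => a < u).card + invOut (insert u A) π := by
  unfold invOut
  rw [← Finset.card_image_of_injective (s := (Aᶜ).filter fun a => a < u)
      (f := fun a => (a, u)) (fun a b h => by simpa using h),
    ← Finset.card_union_of_disjoint]
  · congr 1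
    ext ⟨a, b⟩
    simp only [moveToTop_inv_apply, Finset.mem_filter, Finset.mem_univ, true_and, Finset.mem_union,
      Finset.mem_image, Finset.mem_compl, Prod.mk.injEq,
      Finset.mem_insert, not_or]
    by_cases hb : b = u
    · subst hb
      constructor
      · rintro ⟨h1, h2, h3, h4⟩
        exact Or.inl ⟨a, ⟨h1, h3⟩, rfl, rfl⟩
      · rintro (⟨a', ⟨h1, h3⟩, rfl, _⟩ | ⟨_, ⟨h, _⟩, _⟩)
        · refine ⟨h1, hu, h3, cycleRange_self_lt _ _ ?_⟩
          intro h; exact h3.ne (π⁻¹.injective h)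
        · exact absurd rfl h
    · by_cases ha : a = u
      · subst ha
        constructor
        · rintro ⟨h1, h2, h3, h4⟩
          exact absurd h4 (not_lt.mpr (cycleRange_self_lt _ _ (fun h => hb (π⁻¹.injective h))).le)
        · rintro (⟨a', ⟨h1, h3⟩, rfl, h⟩ | ⟨⟨h, _⟩, _⟩)
          · exact absurd h.symm hb
          · exact absurd rfl h
      · rw [cycleRange_lt_iff _ _ _ (fun h => hb (π⁻¹.injective h)) (fun h => ha (π⁻¹.injective h))]
        constructor
        · rintro ⟨h1, h2, h3, h4⟩
          exact Or.inr ⟨⟨ha, h1⟩, ⟨hb, h2⟩, h3, h4⟩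
        · rintro (⟨a', _, _, h⟩ | ⟨⟨_, h1⟩, ⟨_, h2⟩, h3, h4⟩)
          · exact absurd h.symm hb
          · exact ⟨h1, h2, h3, h4⟩
  · rw [Finset.disjoint_left]
    rintro ⟨a, b⟩ h1 h2
    simp at h1 h2
    exact h2.2.1.1 h1.2.symm

lemma sum_rank {α M : Type*} [LinearOrder α] [AddCommMonoid M] (S : Finset α) (f : ℕ → M) :
    ∑ u ∈ S, f ((S.filter fun a => a < u).card) = ∑ j ∈ Finset.range S.card, f j := by
  induction S using Finset.induction_on_max with
  | empty => simp
  | insert m S hm ih =>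
    have hmS : m ∉ S := fun h => lt_irrefl _ (hm m h)
    rw [Finset.sum_insert hmS, Finset.card_insert_of_notMem hmS, Finset.sum_range_succ, ← ih,
      add_comm]
    congr 1
    · refine Finset.sum_congr rfl fun u hu => ?_
      congr 2
      ext a
      simp only [Finset.mem_filter, Finset.mem_insert]
      constructor
      · rintro ⟨rfl | h, h2⟩
        · exact absurd h2 (not_lt.mpr (hm u hu).le)
        · exact ⟨h, h2⟩
      · rintro ⟨h, h2⟩; exact ⟨Or.inr h, h2⟩
    · congr 2
      ext a
      simp only [Finset.mem_filter, Finset.mem_insert]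
      constructor
      · rintro ⟨rfl | h, h2⟩
        · exact absurd h2 (lt_irrefl _)
        · exact h
      · intro h; exact ⟨Or.inr h, hm a h⟩

/-- The backward recursion for the generating function. -/
noncomputable def genRec (n : ℕ) (z : ℂ) : ℕ → ℕ → ℂ
  | 0, _ => 1
  | k + 1, e => (1 - (e : ℂ) / n) * genRec n z k e
      + (∑ j ∈ Finset.range e, z ^ j) / n * genRec n z k (e - 1)

lemma rttPerm_snoc (n r : ℕ) (s : Fin r → Fin n) (u : Fin n) :
    rttPerm n (r + 1) (Fin.snoc s u : Fin (r + 1) → Fin n) = moveToTop u (rttPerm n r s) := by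
  unfold rttPerm
  rw [List.ofFn_succ']
  simp [List.concat_eq_append]

lemma sum_pow_invOut (n : ℕ) (hn : 0 < n) (z : ℂ) (r : ℕ) : ∀ A : Finset (Fin n),
    ∑ s : Fin r → Fin n, z ^ (invOut A (rttPerm n r s)) = (n : ℂ) ^ r * genRec n z r (Aᶜ).card := by
  have hn' : (n : ℂ) ≠ 0 := by exact_mod_cast hn.ne'
  induction r with
  | zero =>
    intro A
    simp [genRec, rttPerm, invOut_one]
  | succ r ih =>
    intro A
    rw [← (Fin.snocEquiv (fun _ : Fin (r+1) => Fin n)).sum_comp, Fintype.sum_prod_type]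
    have h1 : ∀ u : Fin n, ∑ s : Fin r → Fin n,
        z ^ (invOut A (rttPerm n (r+1) ((Fin.snocEquiv (fun _ : Fin (r+1) => Fin n)) (u, s))))
        = if u ∈ A then (n : ℂ) ^ r * genRec n z r (Aᶜ).card else
          z ^ ((Aᶜ).filter fun a => a < u).card * ((n : ℂ) ^ r * genRec n z r ((Aᶜ).card - 1)) := by
      intro u
      have h2 : ∀ s : Fin r → Fin n,
        rttPerm n (r+1) ((Fin.snocEquiv (fun _ : Fin (r+1) => Fin n)) (u, s))
          = moveToTop u (rttPerm n r s) := fun s => rttPerm_snoc n r s u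
      simp only [h2]
      split_ifs with hu
      · simp only [invOut_moveToTop_mem A _ u hu]
        exact ih A
      · simp only [invOut_moveToTop_notMem A _ u hu, pow_add, ← Finset.mul_sum]
        rw [ih (insert u A)]
        congr 4
        rw [Finset.compl_insert, Finset.card_erase_of_mem (by simpa using hu)]
    refine (Finset.sum_congr rfl fun u _ => h1 u).trans ?_
    rw [Finset.sum_ite]
    have h3 : (Finset.univ.filter fun u : Fin n => u ∉ A) = Aᶜ := by ext; simp
    have h4 : (Finset.univ.filter fun u : Fin n => u ∈ A) = A := by ext; simp
    rw [h3, h4, Finset.sum_const, nsmul_eq_mul, ← Finset.sum_mul, sum_rank (Aᶜ) (fun j => z ^ j)]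
    have h5 : (A.card : ℂ) = n - (Aᶜ).card := by
      have := Finset.card_add_card_compl A
      rw [Fintype.card_fin] at this
      rw [eq_sub_iff_add_eq]
      exact_mod_cast this
    rw [h5, genRec]
    field_simp
    ring

lemma unifExpect_cexp (n : ℕ) (hn : 0 < n) (r : ℕ) (z : ℂ) :
    (∑ s : Fin r → Fin n, z ^ (inversionCount (rttPerm n r s))) / (n : ℂ) ^ r = genRec n z r n := by
  simp only [inversionCount_eq_invOut]
  rw [sum_pow_invOut n hn z r ∅]
  have hn' : (n : ℂ) ≠ 0 := by exact_mod_cast hn.ne'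
  simp [hn']

end Combinatorics
section Analysis

noncomputable def varV (x y s : ℝ) : ℝ :=
  x^3/36 + 2/9*x^3*y^3 - x^3*y^4/4 - x^4*s*y^4/4

noncomputable def polyQ0 (x y s d : ℝ) : ℝ :=
    (2/3)*x^3*y^3
    + (-2/3)*x^3*y^3*d
    + (2/9)*x^3*y^3*d^2
    + (-1)*x^3*y^4
    + (3/2)*x^3*y^4*d
    + (-1)*x^3*y^4*d^2
    + (1/4)*x^3*y^4*d^3
    + (1/4)*x^4*y^4
    + (-1)*x^4*y^4*d
    + (3/2)*x^4*y^4*d^2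
    + (-1)*x^4*y^4*d^3
    + (1/4)*x^4*y^4*d^4
    + (-1)*x^4*y^4*s
    + (3/2)*x^4*y^4*s*d
    + (-1)*x^4*y^4*s*d^2
    + (1/4)*x^4*y^4*s*d^3

noncomputable def polyQ1 (x y s d : ℝ) : ℝ :=
    (-1/36)*d^2
    + (-2/9)*y^3*d^2
    + (1/4)*y^4*d^2
    + (-1/4)*y^4*s*d^3
    + (1/12)*x*d
    + (2/3)*x*y^3*d
    + (-3/4)*x*y^4*d
    + (1)*x*y^4*s*d^2
    + (-1/12)*x^2
    + (-2/3)*x^2*y^3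
    + (3/4)*x^2*y^4
    + (-3/2)*x^2*y^4*s*d
    + (2/3)*x^3*y^3
    + (-2/3)*x^3*y^3*d
    + (2/9)*x^3*y^3*d^2
    + (-1)*x^3*y^4
    + (3/2)*x^3*y^4*d
    + (-1)*x^3*y^4*d^2
    + (1/4)*x^3*y^4*d^3
    + (1)*x^3*y^4*s
    + (1/4)*x^4*y^4
    + (-1)*x^4*y^4*d
    + (3/2)*x^4*y^4*d^2
    + (-1)*x^4*y^4*d^3
    + (1/4)*x^4*y^4*d^4
    + (-1)*x^4*y^4*s
    + (3/2)*x^4*y^4*s*d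
    + (-1)*x^4*y^4*s*d^2
    + (1/4)*x^4*y^4*s*d^3

noncomputable def polyR (x y s d : ℝ) : ℝ :=
    (-1/9)*x*d
    + (-2/9)*x*y^3*d
    + (1/2)*x*y^4*d
    + (-1/4)*x*y^4*s*d^2
    + (1/12)*x^2
    + (2/3)*x^2*y^3
    + (-5/4)*x^2*y^4
    + (-1/4)*x^2*y^4*d
    + (1)*x^2*y^4*s*d
    + (-2/3)*x^3*y^3
    + (2/9)*x^3*y^3*d
    + (2)*x^3*y^4
    + (-1)*x^3*y^4*d
    + (1/4)*x^3*y^4*d^2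
    + (-3/2)*x^3*y^4*s
    + (-1)*x^4*y^4
    + (3/2)*x^4*y^4*d
    + (-1)*x^4*y^4*d^2
    + (1/4)*x^4*y^4*d^3
    + (3/2)*x^4*y^4*s
    + (-1)*x^4*y^4*s*d
    + (1/4)*x^4*y^4*s*d^2

lemma varV_D0 (x y s d : ℝ) :
    varV x y s - varV x ((1 - d) * y) (s + d) = d * polyQ0 x y s d := by
  unfold varV polyQ0; ring

lemma varV_D1 (x y s d : ℝ) :
    varV (x - d) y s - varV x ((1 - d) * y) (s + d) = d * polyQ1 x y s d := by
  unfold varV polyQ1; ring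

lemma varV_ED (x y s d : ℝ) :
    x * (varV (x - d) y s - varV x ((1 - d) * y) (s + d))
      + (1 - x) * (varV x y s - varV x ((1 - d) * y) (s + d))
      + d * (x * ((x^2 - d^2) / 12 + (x - d)^2 * y^4 / 4) - y^4 * x^2 * (x - d)^2 / 4)
      = d^2 * polyR x y s d := by
  unfold varV polyR; ring

lemma box_bound (c : ℝ) (f : ℝ → ℝ → ℝ → ℝ → ℝ)
    (hf : Continuous fun q : ℝ × ℝ × ℝ × ℝ => f q.1 q.2.1 q.2.2.1 q.2.2.2) :
    ∃ K : ℝ, ∀ x y s d : ℝ, 0 ≤ x → x ≤ 1 → 0 ≤ y → y ≤ 1 → 0 ≤ s → s ≤ c → 0 ≤ d → d ≤ 1 →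
      |f x y s d| ≤ K := by
  have hK : IsCompact (Set.Icc (0:ℝ) 1 ×ˢ Set.Icc (0:ℝ) 1 ×ˢ Set.Icc (0:ℝ) c ×ˢ Set.Icc (0:ℝ) 1) :=
    isCompact_Icc.prod (isCompact_Icc.prod (isCompact_Icc.prod isCompact_Icc))
  obtain ⟨K, h⟩ := hK.exists_bound_of_continuousOn hf.continuousOn
  refine ⟨K, fun x y s d h1 h2 h3 h4 h5 h6 h7 h8 => ?_⟩
  exact h (x, y, s, d) ⟨⟨h1, h2⟩, ⟨h3, h4⟩, ⟨h5, h6⟩, ⟨h7, h8⟩⟩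

/-- All the uniform bounds used below. -/
lemma exists_bounds (c : ℝ) : ∃ K : ℝ, 1 ≤ K ∧ ∀ x y s d : ℝ, 0 ≤ x → x ≤ 1 → 0 ≤ y → y ≤ 1 →
    0 ≤ s → s ≤ c → 0 ≤ d → d ≤ 1 →
      |varV x y s| ≤ K ∧ |polyQ0 x y s d| ≤ K ∧ |polyQ1 x y s d| ≤ K ∧ |polyR x y s d| ≤ K := by
  obtain ⟨K0, h0⟩ := box_bound c (fun x y s _ => varV x y s) (by unfold varV; fun_prop)
  obtain ⟨K1, h1⟩ := box_bound c polyQ0 (by unfold polyQ0; fun_prop)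
  obtain ⟨K2, h2⟩ := box_bound c polyQ1 (by unfold polyQ1; fun_prop)
  obtain ⟨K3, h3⟩ := box_bound c polyR (by unfold polyR; fun_prop)
  refine ⟨1 + |K0| + |K1| + |K2| + |K3|, by linarith [abs_nonneg K0, abs_nonneg K1, abs_nonneg K2, abs_nonneg K3], ?_⟩
  intro x y s d a1 a2 a3 a4 a5 a6 a7 a8
  have b0 := h0 x y s d a1 a2 a3 a4 a5 a6 a7 a8
  have b1 := h1 x y s d a1 a2 a3 a4 a5 a6 a7 a8
  have b2 := h2 x y s d a1 a2 a3 a4 a5 a6 a7 a8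
  have b3 := h3 x y s d a1 a2 a3 a4 a5 a6 a7 a8
  have e0 := le_abs_self K0
  have e1 := le_abs_self K1
  have e2 := le_abs_self K2
  have e3 := le_abs_self K3
  have f0 := abs_nonneg K0
  have f1 := abs_nonneg K1
  have f2 := abs_nonneg K2
  have f3 := abs_nonneg K3
  exact ⟨by linarith, by linarith, by linarith, by linarith⟩

lemma exp_taylor (t K : ℝ) (hK : 0 ≤ K) : ∃ C : ℝ, 0 ≤ C ∧ ∀ h X D : ℝ, 0 ≤ h → h ≤ 1 →
    |X| ≤ K * h → |D| ≤ K * h^2 →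
    ‖Complex.exp (Complex.I * ((t * X : ℝ) : ℂ) - ((t^2/2 * D : ℝ) : ℂ))
      - (1 + Complex.I * ((t * X : ℝ) : ℂ) - ((t^2/2 * (D + X^2) : ℝ) : ℂ))‖ ≤ C * h^3 := by
  set L : ℝ := |t| * K + t^2/2 * K with hL
  have hL0 : 0 ≤ L := by positivity
  refine ⟨L^3 * Real.exp L + (|t|^3/2 * K^2 + t^4/8 * K^2), by positivity, ?_⟩
  intro h X D h0 h1 hX hD
  set z : ℂ := Complex.I * ((t * X : ℝ) : ℂ) - ((t^2/2 * D : ℝ) : ℂ) with hz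
  have hh : h^2 ≤ h := by nlinarith
  have hzn : ‖z‖ ≤ L * h := by
    calc ‖z‖ ≤ ‖Complex.I * ((t * X : ℝ) : ℂ)‖ + ‖((t^2/2 * D : ℝ) : ℂ)‖ := norm_sub_le _ _
      _ = |t| * |X| + t^2/2 * |D| := by
        rw [norm_mul, Complex.norm_I, Complex.norm_real, Complex.norm_real, one_mul,
          Real.norm_eq_abs, Real.norm_eq_abs, abs_mul, abs_mul, abs_of_nonneg (by positivity : 0 ≤ t^2/2)]
      _ ≤ |t| * (K * h) + t^2/2 * (K * h) := by
        have : |D| ≤ K * h := hD.trans (by gcongr)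
        gcongr
      _ = L * h := by rw [hL]; ring
  have hzL : ‖z‖ ≤ L := hzn.trans (by nlinarith)
  have e1 : ‖Complex.exp z - (1 + z + z^2/2)‖ ≤ L^3 * Real.exp L * h^3 := by
    have := Complex.norm_exp_sub_sum_le_norm_mul_exp z 3
    simp only [Finset.sum_range_succ, Finset.sum_range_zero] at this
    norm_num at this
    refine this.trans ?_
    calc ‖z‖^3 * Real.exp ‖z‖ ≤ (L*h)^3 * Real.exp L := by gcongr
      _ = _ := by ring
  have e2 : (1 + z + z^2/2) - (1 + Complex.I * ((t * X : ℝ) : ℂ) - ((t^2/2 * (D + X^2) : ℝ) : ℂ))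
      = - (Complex.I * ((t^3/2 * (X * D) : ℝ) : ℂ)) + ((t^4/8 * D^2 : ℝ) : ℂ) := by
    rw [hz]; push_cast
    linear_combination ((t:ℂ)^2 * X^2 / 2) * Complex.I_sq
  have e3 : ‖(1 + z + z^2/2) - (1 + Complex.I * ((t * X : ℝ) : ℂ) - ((t^2/2 * (D + X^2) : ℝ) : ℂ))‖
      ≤ (|t|^3/2 * K^2 + t^4/8 * K^2) * h^3 := by
    rw [e2]
    refine (norm_add_le _ _).trans ?_
    rw [norm_neg, norm_mul, Complex.norm_I, Complex.norm_real, Complex.norm_real, one_mul,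
          Real.norm_eq_abs, Real.norm_eq_abs, abs_mul, abs_mul, abs_mul, abs_div, abs_pow, abs_pow,
          abs_of_nonneg (by positivity : 0 ≤ t^4/8), abs_two]
    have g1 : |X| * |D| ≤ (K * h) * (K * h^2) := by gcongr
    have g2 : |D|^2 ≤ K^2 * h^3 := by
      calc |D|^2 ≤ (K * h^2)^2 := by gcongr
        _ = K^2 * h^3 * h := by ring
        _ ≤ K^2 * h^3 * 1 := by gcongr
        _ = _ := by ring
    calc |t|^3/2 * (|X| * |D|) + t^4/8 * |D|^2
        ≤ |t|^3/2 * ((K * h) * (K * h^2)) + t^4/8 * (K^2 * h^3) := by gcongr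
      _ = _ := by ring
  calc _ = ‖(Complex.exp z - (1 + z + z^2/2)) + ((1 + z + z^2/2) - (1 + Complex.I * ((t * X : ℝ) : ℂ) - ((t^2/2 * (D + X^2) : ℝ) : ℂ)))‖ := by ring_nf
    _ ≤ _ := norm_add_le _ _
    _ ≤ L^3 * Real.exp L * h^3 + (|t|^3/2 * K^2 + t^4/8 * K^2) * h^3 := add_le_add e1 e3
    _ = _ := by ring

lemma avg_bound (t h C K' : ℝ) (n e : ℕ) (hn : 0 < n) (he : e ≤ n) (X0 D0 D1 : ℝ) (X : ℕ → ℝ)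
    (E0 : ℂ) (E : ℕ → ℂ)
    (h0 : ‖E0 - (1 + Complex.I * ((t * X0 : ℝ) : ℂ) - ((t^2/2 * (D0 + X0^2) : ℝ) : ℂ))‖ ≤ C * h^3)
    (h1 : ∀ j < e, ‖E j - (1 + Complex.I * ((t * X j : ℝ) : ℂ)
      - ((t^2/2 * (D1 + (X j)^2) : ℝ) : ℂ))‖ ≤ C * h^3)
    (hmean : (1 - (e : ℝ) / n) * X0 + (∑ j ∈ Finset.range e, X j) / n = 0)
    (hvar : |(1 - (e : ℝ) / n) * (D0 + X0^2) + (∑ j ∈ Finset.range e, (D1 + (X j)^2)) / n|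
      ≤ K' * h^3) :
    ‖1 - ((1 - (e : ℂ) / n) * E0 + (∑ j ∈ Finset.range e, E j) / n)‖ ≤ (C + t^2/2 * K') * h^3 := by
  have hn0 : (0:ℝ) < n := by exact_mod_cast hn
  have hnC : (n : ℂ) ≠ 0 := by exact_mod_cast hn.ne'
  have hx1 : (e : ℝ) / n ≤ 1 := by
    rw [div_le_one hn0]; exact_mod_cast he
  have hx0 : 0 ≤ (e : ℝ) / n := by positivity
  set A0 : ℂ := 1 + Complex.I * ((t * X0 : ℝ) : ℂ) - ((t^2/2 * (D0 + X0^2) : ℝ) : ℂ) with hA0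
  set A : ℕ → ℂ := fun j => 1 + Complex.I * ((t * X j : ℝ) : ℂ)
      - ((t^2/2 * (D1 + (X j)^2) : ℝ) : ℂ) with hA
  set W : ℝ := (1 - (e : ℝ) / n) * (D0 + X0^2) + (∑ j ∈ Finset.range e, (D1 + (X j)^2)) / n with hW
  have hsum : (1 - (e : ℂ) / n) * A0 + (∑ j ∈ Finset.range e, A j) / n
      = 1 - ((t^2/2 * W : ℝ) : ℂ) := by
    have hm : (1 - (e : ℂ) / n) * (X0 : ℂ) + (∑ j ∈ Finset.range e, (X j : ℂ)) / n = 0 := by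
      have hm0 := congrArg (fun r : ℝ => (r : ℂ)) hmean
      push_cast at hm0
      exact hm0
    simp only [hA, hA0, hW, Finset.sum_sub_distrib, Finset.sum_add_distrib, Finset.sum_const,
      Finset.card_range, nsmul_eq_mul]
    push_cast
    simp only [← Finset.mul_sum, Finset.sum_add_distrib, Finset.sum_const,
      Finset.card_range, nsmul_eq_mul]
    linear_combination (Complex.I * t) * hm
  have hdec : 1 - ((1 - (e : ℂ) / n) * E0 + (∑ j ∈ Finset.range e, E j) / n)
      = ((t^2/2 * W : ℝ) : ℂ) - (((1 - (e : ℝ) / n : ℝ) : ℂ) * (E0 - A0)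
        + (∑ j ∈ Finset.range e, (E j - A j)) / n) := by
    rw [Finset.sum_sub_distrib]
    push_cast at hsum ⊢
    linear_combination -hsum
  rw [hdec]
  refine (norm_sub_le _ _).trans ?_
  have b1 : ‖((t^2/2 * W : ℝ) : ℂ)‖ ≤ t^2/2 * (K' * h^3) := by
    rw [Complex.norm_real, Real.norm_eq_abs, abs_mul, abs_of_nonneg (by positivity : 0 ≤ t^2/2)]
    gcongr
  have b2 : ‖((1 - (e : ℝ) / n : ℝ) : ℂ) * (E0 - A0)‖ ≤ (1 - (e : ℝ) / n) * (C * h^3) := by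
    rw [norm_mul, Complex.norm_real, Real.norm_eq_abs, abs_of_nonneg (by linarith)]
    exact mul_le_mul_of_nonneg_left h0 (by linarith)
  have b3 : ‖(∑ j ∈ Finset.range e, (E j - A j)) / (n:ℂ)‖ ≤ (e : ℝ) / n * (C * h^3) := by
    rw [norm_div, Complex.norm_natCast, div_mul_eq_mul_div]
    gcongr
    refine (norm_sum_le _ _).trans ?_
    refine (Finset.sum_le_sum (g := fun _ => C * h^3) fun j hj => h1 j (Finset.mem_range.mp hj)).trans ?_
    simp
  have b4 := norm_add_le (((1 - (e : ℝ) / n : ℝ) : ℂ) * (E0 - A0))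
    ((∑ j ∈ Finset.range e, (E j - A j)) / (n:ℂ))
  linarith

noncomputable def meanM (n k : ℕ) (e : ℝ) : ℝ := e * (e - 1) / 4 * (1 - (1 - 2 / (n:ℝ))^k)

noncomputable def varN (n k : ℕ) (e : ℝ) : ℝ := varV (e / n) ((1 - 1 / (n:ℝ))^k) (k / n)

noncomputable def Psi (t h : ℝ) (n k : ℕ) (e : ℝ) : ℂ :=
  Complex.exp (Complex.I * ((t * (h^3 * meanM n k e) : ℝ) : ℂ) - ((t^2/2 * varN n k e : ℝ) : ℂ))

lemma sum_range_id_real (e : ℕ) (a : ℝ) :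
    ∑ j ∈ Finset.range e, ((j : ℝ) + a) = e * (e - 1) / 2 + e * a := by
  induction e with
  | zero => simp
  | succ e ih => rw [Finset.sum_range_succ, ih]; push_cast; ring

lemma sum_range_sq_real (e : ℕ) (a : ℝ) :
    ∑ j ∈ Finset.range e, ((j : ℝ) + a)^2
      = e * (e - 1) * (2 * e - 1) / 6 + a * (e * (e - 1)) + e * a^2 := by
  induction e with
  | zero => simp
  | succ e ih => rw [Finset.sum_range_succ, ih]; push_cast; ring

lemma abs_pow_sub_pow_le' (a b : ℝ) (ha0 : 0 ≤ a) (ha : a ≤ 1) (hb0 : 0 ≤ b) (hb : b ≤ 1) (k : ℕ) :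
    |a^k - b^k| ≤ k * |a - b| := by
  induction k with
  | zero => simp
  | succ k ih =>
    have : a^(k+1) - b^(k+1) = a * (a^k - b^k) + (a - b) * b^k := by ring
    rw [this]
    refine (abs_add_le _ _).trans ?_
    rw [abs_mul, abs_mul, abs_of_nonneg ha0, abs_of_nonneg (pow_nonneg hb0 k)]
    have hbk : b^k ≤ 1 := pow_le_one₀ hb0 hb
    have := abs_nonneg (a^k - b^k)
    have := abs_nonneg (a - b)
    push_cast
    nlinarith

lemma meanM_incr0 (n k : ℕ) (hn : (n:ℝ) ≠ 0) (e : ℝ) :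
    meanM n k e - meanM n (k+1) e = -(e * (e - 1) / (2 * n) * (1 - 2 / (n:ℝ))^k) := by
  unfold meanM; rw [pow_succ]; field_simp; ring

lemma meanM_incr1 (n k : ℕ) (hn : (n:ℝ) ≠ 0) (e : ℝ) :
    meanM n k (e - 1) - meanM n (k+1) e
      = -((e - 1) / 2 * (1 - (1 - 2 / (n:ℝ))^k)) - e * (e - 1) / (2 * n) * (1 - 2 / (n:ℝ))^k := by
  unfold meanM; rw [pow_succ]; field_simp; ring

lemma varN_shift (n k : ℕ) (e : ℝ) :
    varN n (k+1) e = varV (e / n) ((1 - 1/(n:ℝ)) * (1 - 1/(n:ℝ))^k) ((k:ℝ)/n + 1/n) := by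
  unfold varN; rw [pow_succ']; push_cast; ring_nf

lemma varN_shift1 (n k : ℕ) (e : ℝ) :
    varN n k (e - 1) = varV (e / n - 1/(n:ℝ)) ((1 - 1/(n:ℝ))^k) ((k:ℝ)/n) := by
  unfold varN; rw [sub_div]

lemma alg_mean (x n p w : ℝ) (hn : n ≠ 0) :
    (1 - x) * (w * -(x * (x * n - 1) / 2 * p))
      + w * (x * n * (x * n - 1) / 2
        + x * n * (-((x * n - 1) / 2 * (1 - p)) - x * (x * n - 1) / 2 * p)) / n = 0 := by
  field_simp
  ring

lemma alg_var (x n p : ℝ) (hn : n ≠ 0) :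
    (1 / n)^3 * ((1 - x) * (-(x * (x * n - 1) / 2 * p))^2
      + (x * n * (x * n - 1) * (2 * (x * n) - 1) / 6
        + (-((x * n - 1) / 2 * (1 - p)) - x * (x * n - 1) / 2 * p) * (x * n * (x * n - 1))
        + x * n * (-((x * n - 1) / 2 * (1 - p)) - x * (x * n - 1) / 2 * p)^2) / n)
      = (1/n) * (x * ((x^2 - (1/n)^2) / 12 + (x - 1/n)^2 * p^2 / 4)
        - p^2 * x^2 * (x - 1/n)^2 / 4) := by
  field_simp
  ring

set_option maxHeartbeats 2000000 in
lemma defect (t c : ℝ) : ∃ C : ℝ, 0 ≤ C ∧ ∀ (n : ℕ) (h : ℝ), 2 ≤ n → 0 < h → h^2 * n = 1 →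
    ∀ k : ℕ, ((k:ℝ) + 1) / n ≤ c → ∀ e : ℕ, e ≤ n →
    ‖Psi t h n (k+1) e - ((1 - (e:ℂ)/n) * Psi t h n k e
      + (∑ j ∈ Finset.range e, Complex.exp (Complex.I * ((t * h^3 : ℝ) : ℂ))^j) / n
        * Psi t h n k ((e:ℝ) - 1))‖ ≤ C * h^3 := by
  obtain ⟨K, hK1, hK⟩ := exists_bounds c
  obtain ⟨C, hC0, hC⟩ := exp_taylor t K (by linarith)
  refine ⟨Real.exp (t^2/2 * K) * (C + t^2/2 * (K + |c|)), by positivity, ?_⟩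
  intro n h hn hh0 hhn k hk e he
  have hn2 : (2:ℝ) ≤ n := by exact_mod_cast hn
  have hn0 : (0:ℝ) < n := by linarith
  have hne : (n:ℝ) ≠ 0 := hn0.ne'
  have hd : 1 / (n:ℝ) = h^2 := by field_simp; linarith
  have hd1 : 1 / (n:ℝ) ≤ 1 / 2 := by gcongr
  have hd0 : 0 < 1 / (n:ℝ) := by positivity
  have hh1 : h ≤ 1 := by nlinarith
  have heR : (e:ℝ) ≤ n := by exact_mod_cast he
  have he0 : (0:ℝ) ≤ e := by positivity
  set x : ℝ := (e:ℝ) / n with hx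
  have hx0 : 0 ≤ x := by positivity
  have hx1 : x ≤ 1 := by rw [hx, div_le_one hn0]; exact heR
  set y : ℝ := (1 - 1/(n:ℝ))^k with hy
  have hy0 : 0 ≤ y := pow_nonneg (by linarith) k
  have hy1 : y ≤ 1 := pow_le_one₀ (by linarith) (by linarith)
  set p : ℝ := (1 - 2/(n:ℝ))^k with hp
  have h2n : 2/(n:ℝ) = 2 * (1/n) := by ring
  have hp0 : 0 ≤ p := pow_nonneg (by rw [h2n]; linarith) k
  have hp1 : p ≤ 1 := pow_le_one₀ (by rw [h2n]; linarith) (by rw [h2n]; linarith)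
  have hs0 : 0 ≤ (k:ℝ)/n := by positivity
  have hsd : ((k:ℝ)+1)/n = (k:ℝ)/n + 1/n := by ring
  have hs1 : (k:ℝ)/n ≤ c := by linarith
  obtain ⟨_, kQ0, kQ1, kR⟩ := hK x y (k/n) (1/n) hx0 hx1 hy0 hy1 hs0 hs1 hd0.le (by linarith)
  -- bound on Psi (k+1) e
  have hV : |varN n (k+1) e| ≤ K := by
    have := (hK x ((1 - 1/(n:ℝ))^(k+1)) (((k+1 : ℕ):ℝ)/n) 0 hx0 hx1 (pow_nonneg (by linarith) _)
      (pow_le_one₀ (by linarith) (by linarith)) (by positivity) (by push_cast; exact hk) le_rfl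
      zero_le_one).1
    exact this
  have hPsi : ‖Psi t h n (k+1) e‖ ≤ Real.exp (t^2/2 * K) := by
    unfold Psi
    rw [Complex.norm_exp]
    gcongr
    simp only [Complex.sub_re, Complex.mul_re, Complex.I_re, Complex.I_im, Complex.ofReal_re,
      Complex.ofReal_im]
    have := neg_abs_le (varN n (k+1) e)
    have : - varN n (k+1) e ≤ K := by linarith
    linarith [mul_le_mul_of_nonneg_left this (by positivity : 0 ≤ t^2/2)]
  -- the increments
  set a : ℝ := meanM n k ((e:ℝ) - 1) - meanM n (k+1) e with ha
  set b : ℝ := meanM n k e - meanM n (k+1) e with hb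
  set D0 : ℝ := varN n k e - varN n (k+1) e with hD0
  set D1 : ℝ := varN n k ((e:ℝ) - 1) - varN n (k+1) e with hD1
  have ha' := meanM_incr1 n k hne e
  have hb' := meanM_incr0 n k hne e
  rw [← ha, ← hp] at ha'
  rw [← hb, ← hp] at hb'
  have hD0' : D0 = (1/n) * polyQ0 x y (k/n) (1/n) := by
    rw [← varV_D0, hD0, varN_shift]; rfl
  have hD1' : D1 = (1/n) * polyQ1 x y (k/n) (1/n) := by
    rw [← varV_D1, hD1, varN_shift, varN_shift1]
  have hfac0 : Psi t h n k e = Psi t h n (k+1) e *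
      Complex.exp (Complex.I * ((t * (h^3 * b) : ℝ) : ℂ) - ((t^2/2 * D0 : ℝ) : ℂ)) := by
    unfold Psi
    rw [← Complex.exp_add]
    congr 1
    rw [hb, hD0]; push_cast; ring
  have hfac1 : ∀ j : ℕ, Complex.exp (Complex.I * ((t * h^3 : ℝ) : ℂ))^j * Psi t h n k ((e:ℝ) - 1)
      = Psi t h n (k+1) e *
      Complex.exp (Complex.I * ((t * (h^3 * (j + a)) : ℝ) : ℂ) - ((t^2/2 * D1 : ℝ) : ℂ)) := by
    intro j
    unfold Psi
    rw [← Complex.exp_add, ← Complex.exp_nat_mul, ← Complex.exp_add]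
    congr 1
    rw [ha, hD1]; push_cast; ring
  have hrew : Psi t h n (k+1) e - ((1 - (e:ℂ)/n) * Psi t h n k e
      + (∑ j ∈ Finset.range e, Complex.exp (Complex.I * ((t * h^3 : ℝ) : ℂ))^j) / n
        * Psi t h n k ((e:ℝ) - 1))
      = Psi t h n (k+1) e * (1 - ((1 - (e:ℂ)/n) *
        Complex.exp (Complex.I * ((t * (h^3 * b) : ℝ) : ℂ) - ((t^2/2 * D0 : ℝ) : ℂ))
        + (∑ j ∈ Finset.range e,
          Complex.exp (Complex.I * ((t * (h^3 * (j + a)) : ℝ) : ℂ) - ((t^2/2 * D1 : ℝ) : ℂ))) / n)) := by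
    rw [div_mul_eq_mul_div, Finset.sum_mul, Finset.sum_congr rfl fun j _ => hfac1 j,
      ← Finset.mul_sum, hfac0]
    ring
  rw [hrew, norm_mul, mul_assoc]
  refine mul_le_mul hPsi ?_ (norm_nonneg _) (Real.exp_pos _).le
  have hh3 : h^3 * n = h := by
    calc h^3 * n = h * (h^2 * n) := by ring
      _ = h := by rw [hhn, mul_one]
  have hXb : ∀ w : ℝ, |w| ≤ n → |h^3 * w| ≤ K * h := by
    intro w hw
    rw [abs_mul, abs_of_nonneg (by positivity)]
    calc h^3 * |w| ≤ h^3 * n := by gcongr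
      _ = h := hh3
      _ ≤ K * h := le_mul_of_one_le_left hh0.le hK1
  have hDb : ∀ q : ℝ, |q| ≤ K → |(1/(n:ℝ)) * q| ≤ K * h^2 := by
    intro q hq
    rw [hd, abs_mul, abs_of_nonneg (by positivity), mul_comm]
    gcongr
  have hxe : (e:ℝ) * ((e:ℝ) - 1) / (2 * n) = x * ((e:ℝ) - 1) / 2 := by rw [hx]; field_simp
  have hex : (e:ℝ) = x * n := by rw [hx]; field_simp
  refine avg_bound t h C (K + |c|) n e (by omega) he (h^3 * b) D0 D1 (fun j => h^3 * (j + a)) _ _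
    ?_ ?_ ?_ ?_
  · apply hC h _ _ hh0.le hh1
    · apply hXb
      rw [hb', hxe, abs_neg, abs_mul, abs_of_nonneg hp0, abs_div, abs_mul, abs_of_nonneg hx0, abs_two]
      have h1 : |(e:ℝ) - 1| ≤ n := by rw [abs_le]; constructor <;> linarith
      have h2 : x * |(e:ℝ) - 1| ≤ 1 * n := by gcongr
      have h3 : 0 ≤ x * |(e:ℝ) - 1| := by positivity
      have h4 : x * |(e:ℝ) - 1| / 2 * p ≤ x * |(e:ℝ) - 1| / 2 * 1 := by gcongr
      linarith
    · rw [hD0']; exact hDb _ kQ0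
  · intro j hj
    apply hC h _ _ hh0.le hh1
    · apply hXb
      have hj0 : (0:ℝ) ≤ j := by positivity
      have hj1 : (j:ℝ) + 1 ≤ e := by exact_mod_cast hj
      rw [ha', hxe]
      have g0 : 0 ≤ ((e:ℝ) - 1) * (1 - p) := mul_nonneg (by linarith) (by linarith)
      have g1 : 0 ≤ ((e:ℝ) - 1) * p * x := by
        apply mul_nonneg (mul_nonneg (by linarith) hp0) hx0
      have g2 : ((e:ℝ) - 1) * p * x ≤ ((e:ℝ) - 1) * p * 1 :=
        mul_le_mul_of_nonneg_left hx1 (mul_nonneg (by linarith) hp0)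
      rw [abs_le]; constructor <;> linarith
    · rw [hD1']; exact hDb _ kQ1
  · simp only [← Finset.mul_sum]
    rw [sum_range_id_real, ha', hb', hxe, ← hx, hex]
    exact alg_mean x n p (h^3) hne
  · simp only [mul_pow, Finset.sum_add_distrib, ← Finset.mul_sum, Finset.sum_const,
      Finset.card_range, nsmul_eq_mul]
    rw [sum_range_sq_real]
    have hEX : (h^3)^2 * ((1 - x) * b^2 + (e * (e - 1) * (2 * e - 1) / 6 + a * (e * (e - 1)) + e * a^2)/n)
        = (1/n) * (x * ((x^2 - (1/n)^2) / 12 + (x - 1/n)^2 * p^2 / 4) - p^2 * x^2 * (x - 1/n)^2 / 4) := by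
      have h6 : (h^3)^2 = (1/(n:ℝ))^3 := by rw [hd]; ring
      rw [h6, ha', hb', hxe, hex]
      exact alg_var x n p hne
    have hED := varV_ED x y (k/n) (1/n)
    rw [varV_D0, varV_D1, ← hD0', ← hD1'] at hED
    have htot : (1 - (e:ℝ)/n) * (D0 + (h^3)^2 * b^2) + (e * D1 + (h^3)^2 *
        (e * (e - 1) * (2 * e - 1) / 6 + a * (e * (e - 1)) + e * a^2)) / n
        = (1/n)^2 * polyR x y (k/n) (1/n)
          + (1/n) * ((p^2 - y^4) * ((x - x^2) * (x - 1/n)^2 / 4)) := by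
      rw [← hx]
      have : (e * D1 + (h^3)^2 *
        (e * (e - 1) * (2 * e - 1) / 6 + a * (e * (e - 1)) + e * a^2)) / n = x * D1 + (h^3)^2 *
        (e * (e - 1) * (2 * e - 1) / 6 + a * (e * (e - 1)) + e * a^2) / n := by rw [hx]; ring
      rw [this]
      linear_combination hEX + hED
    rw [htot]
    -- p versus y^2
    have hpy : |p - y^2| ≤ |c| * (1/n) := by
      have : y^2 = ((1 - 1/(n:ℝ))^2)^k := by rw [hy, ← pow_mul, ← pow_mul, mul_comm]
      rw [this, hp]
      refine (abs_pow_sub_pow_le' _ _ (by rw [h2n]; linarith) (by rw [h2n]; linarith) (by positivity)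
        (pow_le_one₀ (by linarith) (by linarith)) k).trans ?_
      have h1 : (1 - 2/(n:ℝ)) - (1 - 1/(n:ℝ))^2 = - (1/n)^2 := by ring
      rw [h1, abs_neg, abs_of_nonneg (by positivity)]
      calc (k:ℝ) * (1/n)^2 = (k/n) * (1/n) := by ring
        _ ≤ |c| * (1/n) := by gcongr; exact hs1.trans (le_abs_self c)
    have hpy2 : |p^2 - y^4| ≤ 2 * (|c| * (1/n)) := by
      have : p^2 - y^4 = (p + y^2) * (p - y^2) := by ring
      rw [this, abs_mul]
      have hy2 : y^2 ≤ 1 := pow_le_one₀ hy0 hy1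
      have : |p + y^2| ≤ 2 := by rw [abs_of_nonneg (by positivity)]; linarith
      gcongr
    have hxx : |(x - x^2) * (x - 1/n)^2 / 4| ≤ 1/4 := by
      have g1 : 0 ≤ x - x^2 := by linarith [mul_nonneg hx0 (sub_nonneg.mpr hx1)]
      have g2 : x - x^2 ≤ 1 := by linarith [sq_nonneg x]
      have g3 : (x - 1/n)^2 ≤ 1 := by
        rw [sq_le_one_iff_abs_le_one, abs_le]; constructor <;> linarith
      have g4 : 0 ≤ (x - 1/(n:ℝ))^2 := sq_nonneg _
      rw [abs_of_nonneg (by positivity)]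
      calc (x - x^2) * (x - 1/(n:ℝ))^2 / 4 ≤ 1 * 1 / 4 := by gcongr
        _ = 1/4 := by norm_num
    have hfin : h^4 ≤ h^3 := pow_le_pow_of_le_one hh0.le hh1 (by norm_num)
    calc _ ≤ |(1/(n:ℝ))^2 * polyR x y (k/n) (1/n)|
          + |(1/(n:ℝ)) * ((p^2 - y^4) * ((x - x^2) * (x - 1/n)^2 / 4))| := abs_add_le _ _
      _ ≤ (1/(n:ℝ))^2 * K + (1/n) * ((2 * (|c| * (1/n))) * (1/4)) := by
        rw [abs_mul, abs_mul, abs_mul, abs_of_nonneg (by positivity : 0 ≤ (1/(n:ℝ))^2),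
          abs_of_nonneg (by positivity : 0 ≤ 1/(n:ℝ))]
        gcongr
      _ = (K + |c|/2) * h^4 := by rw [hd]; ring
      _ ≤ (K + |c|) * h^3 := by
        have := abs_nonneg c
        gcongr
        linarith


lemma genRec_approx (t c : ℝ) : ∃ C : ℝ, 0 ≤ C ∧ ∀ (n : ℕ) (h : ℝ), 2 ≤ n → 0 < h → h^2 * n = 1 →
    ∀ k : ℕ, (k:ℝ) / n ≤ c → ∀ e : ℕ, e ≤ n →
    ‖genRec n (Complex.exp (Complex.I * ((t * h^3 : ℝ) : ℂ))) k e - Psi t h n k e‖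
      ≤ k * (C * h^3) := by
  obtain ⟨C, hC0, hC⟩ := defect t c
  refine ⟨C, hC0, ?_⟩
  intro n h hn hh0 hhn k
  have hn0 : (0:ℝ) < n := by
    have : (2:ℝ) ≤ n := by exact_mod_cast hn
    linarith
  induction k with
  | zero =>
    intro _ e _
    simp [genRec, Psi, meanM, varN, varV]
    norm_num
    ring_nf
    simp
  | succ k ih =>
    intro hk e he
    push_cast at hk
    have hk' : (k:ℝ)/n ≤ c := le_trans (by gcongr; linarith) hk
    have ih := ih hk'
    have hdef := hC n h hn hh0 hhn k hk e he
    set z : ℂ := Complex.exp (Complex.I * ((t * h^3 : ℝ) : ℂ)) with hz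
    have hz1 : ‖z‖ = 1 := by
      rw [hz, mul_comm]; exact Complex.norm_exp_ofReal_mul_I _
    have hx1 : (e : ℝ) / n ≤ 1 := by
      rw [div_le_one hn0]; exact_mod_cast he
    set B : ℝ := k * (C * h^3) with hB
    have hB0 : 0 ≤ B := by positivity
    set S : ℂ := ∑ j ∈ Finset.range e, z^j with hS
    have hSn : ‖S‖ ≤ e := by
      refine (norm_sum_le _ _).trans ?_
      simp [hz1]
    have hterm : ‖S / n * (genRec n z k (e-1) - Psi t h n k ((e:ℝ) - 1))‖ ≤ (e:ℝ)/n * B := by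
      rcases Nat.eq_zero_or_pos e with h0 | h0
      · subst h0; simp [hS]
      · have h1 : ((e - 1 : ℕ) : ℝ) = (e:ℝ) - 1 := by
          rw [Nat.cast_sub h0]; simp
        have h2 := ih (e - 1) (by omega)
        rw [h1] at h2
        rw [norm_mul, norm_div, Complex.norm_natCast]
        gcongr
    have hterm0 : ‖((1 - (e:ℝ)/n : ℝ) : ℂ) * (genRec n z k e - Psi t h n k e)‖
        ≤ (1 - (e:ℝ)/n) * B := by
      rw [norm_mul, Complex.norm_real, Real.norm_eq_abs, abs_of_nonneg (by linarith)]
      exact mul_le_mul_of_nonneg_left (ih e he) (by linarith)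
    have hdec : genRec n z (k+1) e - Psi t h n (k+1) e
        = ((1 - (e:ℝ)/n : ℝ) : ℂ) * (genRec n z k e - Psi t h n k e)
          + S / n * (genRec n z k (e-1) - Psi t h n k ((e:ℝ) - 1))
          - (Psi t h n (k+1) e - ((1 - (e:ℂ)/n) * Psi t h n k e
            + S / n * Psi t h n k ((e:ℝ) - 1))) := by
      rw [genRec]; push_cast; ring
    rw [hdec]
    refine (norm_sub_le _ _).trans ?_
    have := norm_add_le (((1 - (e:ℝ)/n : ℝ) : ℂ) * (genRec n z k e - Psi t h n k e))
      (S / n * (genRec n z k (e-1) - Psi t h n k ((e:ℝ) - 1)))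
    rw [Nat.cast_succ]
    linarith

lemma pow_exp_bound (c q : ℝ) (hc : 0 < c) (hq0 : 0 ≤ q) (n : ℕ) (hn0 : 0 < n) (hn : q ≤ n) :
    |(1 - q/(n:ℝ))^(⌊c * (n:ℝ)⌋₊) - Real.exp (-q * c)| ≤ (q^2 * c + q) * (1/n) := by
  have hn' : (0:ℝ) < n := by exact_mod_cast hn0
  set r := ⌊c * (n:ℝ)⌋₊ with hr
  have hr1 : (r:ℝ) ≤ c * n := Nat.floor_le (by positivity)
  have hr2 : c * n < r + 1 := Nat.lt_floor_add_one _
  have hq1 : q/(n:ℝ) ≤ 1 := by rw [div_le_one hn']; exact hn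
  have hqn : 0 ≤ q/(n:ℝ) := by positivity
  have h1 : |(1 - q/(n:ℝ))^r - (Real.exp (-(q/n)))^r| ≤ q^2 * c * (1/n) := by
    refine (abs_pow_sub_pow_le' _ _ (by linarith) (by linarith) (Real.exp_pos _).le
      (Real.exp_le_one_iff.mpr (by linarith)) r).trans ?_
    have h2 := Real.abs_exp_sub_one_sub_id_le (x := -(q/n)) (by rw [abs_neg, abs_of_nonneg hqn]; exact hq1)
    have h3 : |1 - q/(n:ℝ) - Real.exp (-(q/n))| ≤ (q/n)^2 := by
      rw [abs_sub_comm]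
      calc _ = |Real.exp (-(q/n)) - 1 - -(q/n)| := by congr 1; ring
        _ ≤ _ := h2
        _ = _ := by ring
    calc (r:ℝ) * |1 - q/(n:ℝ) - Real.exp (-(q/n))| ≤ (c * n) * (q/n)^2 := by gcongr
      _ = _ := by field_simp
  have h4 : |(Real.exp (-(q/n)))^r - Real.exp (-q * c)| ≤ q * (1/n) := by
    rw [← Real.exp_nat_mul]
    have hb : (r:ℝ) * -(q/n) ≤ 0 := by
      have : 0 ≤ (r:ℝ) * (q/n) := by positivity
      linarith
    have hrn : (r:ℝ)/n ≤ c := by rw [div_le_iff₀ hn']; exact hr1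
    have hrn2 : c - r/n ≤ 1/n := by
      have : c - r/n = (c * n - r)/n := by field_simp
      rw [this]; gcongr; linarith
    have hab : -q * c ≤ (r:ℝ) * -(q/n) := by
      have : (r:ℝ) * -(q/n) = -q * (r/n) := by ring
      rw [this]; nlinarith
    rw [abs_of_nonneg (sub_nonneg.mpr (Real.exp_le_exp.mpr hab))]
    have e1 : Real.exp (-q * c) = Real.exp ((r:ℝ) * -(q/n)) * Real.exp (-q * c - (r:ℝ) * -(q/n)) := by
      rw [← Real.exp_add]; congr 1; ring
    have e2 := Real.add_one_le_exp (-q * c - (r:ℝ) * -(q/n))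
    have e3 : Real.exp ((r:ℝ) * -(q/n)) ≤ 1 := Real.exp_le_one_iff.mpr hb
    have e4 := Real.exp_pos ((r:ℝ) * -(q/n))
    have e5 : Real.exp ((r:ℝ) * -(q/n)) - Real.exp (-q * c) ≤ 1 * ((r:ℝ) * -(q/n) + q * c) := by
      rw [e1]
      have : 0 ≤ (r:ℝ) * -(q/n) + q * c := by linarith
      nlinarith [mul_le_mul_of_nonneg_right e3 this]
    refine e5.trans ?_
    have : 1 * ((r:ℝ) * -(q/n) + q * c) = q * (c - r/n) := by ring
    rw [this]
    gcongr
  calc _ ≤ _ := abs_sub_le _ ((Real.exp (-(q/n)))^r) _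
    _ ≤ q^2 * c * (1/n) + q * (1/n) := add_le_add h1 h4
    _ = _ := by ring

/-- The limiting variance. -/
noncomputable def sigma2 (c : ℝ) : ℝ :=
  (1 + 8 * Real.exp (-3 * c) - 9 * (1 + c) * Real.exp (-4 * c)) / 36

lemma sigma2_eq (c : ℝ) : sigma2 c = varV 1 (Real.exp (-1 * c)) c := by
  have h3 : Real.exp (-3 * c) = Real.exp (-1 * c)^3 := by
    rw [← Real.exp_nat_mul]; congr 1; push_cast; ring
  have h4 : Real.exp (-4 * c) = Real.exp (-1 * c)^4 := by
    rw [← Real.exp_nat_mul]; congr 1; push_cast; ring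
  unfold sigma2 varV
  rw [h3, h4]; ring

lemma sigma2_nonneg (c : ℝ) (hc : 0 < c) : 0 ≤ sigma2 c := by
  have h3 : Real.exp (-3 * c) = Real.exp c * Real.exp (-4 * c) := by
    rw [← Real.exp_add]; congr 1; ring
  have h1 := Real.add_one_le_exp c
  have h4 := Real.exp_pos (-4 * c)
  have h5 : Real.exp (-3 * c) ≤ 1 := Real.exp_le_one_iff.mpr (by linarith)
  unfold sigma2
  have h6 : (1 + c) * Real.exp (-4 * c) ≤ Real.exp (-3 * c) := by
    rw [h3]; gcongr; linarith
  linarith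

lemma tendsto_inv_n : Tendsto (fun n : ℕ => 1 / (n:ℝ)) atTop (𝓝 0) :=
  tendsto_one_div_atTop_nhds_zero_nat

lemma tendsto_hn : Tendsto (fun n : ℕ => (√(n:ℝ))⁻¹) atTop (𝓝 0) :=
  tendsto_inv_atTop_zero.comp (Real.tendsto_sqrt_atTop.comp tendsto_natCast_atTop_atTop)

lemma tendsto_pow_exp (c q : ℝ) (hc : 0 < c) (hq0 : 0 ≤ q) :
    Tendsto (fun n : ℕ => (1 - q/(n:ℝ))^(⌊c * (n:ℝ)⌋₊)) atTop (𝓝 (Real.exp (-q * c))) := by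
  rw [tendsto_iff_dist_tendsto_zero]
  have h0 : Tendsto (fun n : ℕ => (q^2 * c + q) * (1/(n:ℝ))) atTop (𝓝 0) := by
    simpa using tendsto_inv_n.const_mul (q^2 * c + q)
  refine tendsto_of_tendsto_of_tendsto_of_le_of_le' tendsto_const_nhds h0
    (Eventually.of_forall fun _ => dist_nonneg) ?_
  filter_upwards [eventually_gt_atTop 0, eventually_ge_atTop ⌈q⌉₊] with n hn hn2
  rw [Real.dist_eq]
  exact pow_exp_bound c q hc hq0 n hn (Nat.ceil_le.mp hn2)

lemma tendsto_floor_div (c : ℝ) (hc : 0 < c) :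
    Tendsto (fun n : ℕ => (⌊c * (n:ℝ)⌋₊ : ℝ) / n) atTop (𝓝 c) :=
  (tendsto_nat_floor_mul_div_atTop hc.le).comp tendsto_natCast_atTop_atTop

lemma tendsto_varN (c : ℝ) (hc : 0 < c) :
    Tendsto (fun n : ℕ => varN n ⌊c * (n:ℝ)⌋₊ n) atTop (𝓝 (sigma2 c)) := by
  have h1 := tendsto_pow_exp c 1 hc zero_le_one
  have h2 := tendsto_floor_div c hc
  have hcont : Continuous fun q : ℝ × ℝ => varV 1 q.1 q.2 := by unfold varV; fun_prop
  have h3 := (hcont.tendsto (Real.exp (-1 * c), c)).comp (h1.prodMk_nhds h2)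
  rw [sigma2_eq]
  refine h3.congr' ?_
  filter_upwards [eventually_gt_atTop 0] with n hn
  have hn' : (n:ℝ) ≠ 0 := by exact_mod_cast hn.ne'
  simp [varN, div_self hn']

lemma tendsto_mean_err (c : ℝ) (hc : 0 < c) :
    Tendsto (fun n : ℕ => ((√(n:ℝ))⁻¹)^3 * (meanM n ⌊c * (n:ℝ)⌋₊ n
      - (n:ℝ)^2 * (1 - Real.exp (-2 * c)) / 4)) atTop (𝓝 0) := by
  have h0 : Tendsto (fun n : ℕ => (1 + (2^2 * c + 2)) * (√(n:ℝ))⁻¹) atTop (𝓝 0) := by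
    simpa using tendsto_hn.const_mul (1 + (2^2 * c + 2))
  refine squeeze_zero_norm' ?_ h0
  filter_upwards [eventually_ge_atTop 2] with n hn
  have hn2 : (2:ℝ) ≤ n := by exact_mod_cast hn
  have hn0 : (0:ℝ) < n := by linarith
  have hb := pow_exp_bound c 2 hc (by norm_num) n (by omega) hn2
  set p : ℝ := (1 - 2/(n:ℝ))^⌊c * (n:ℝ)⌋₊ with hp
  have h2n : 2/(n:ℝ) ≤ 1 := by rw [div_le_one hn0]; exact hn2
  have h2n' : 0 ≤ 2/(n:ℝ) := by positivity
  have hp0 : 0 ≤ p := pow_nonneg (by linarith) _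
  have hp1 : p ≤ 1 := pow_le_one₀ (by linarith) (by linarith)
  have hh : 0 < (√(n:ℝ))⁻¹ := by positivity
  have hhn : ((√(n:ℝ))⁻¹)^3 * n = (√(n:ℝ))⁻¹ := by
    have : (n:ℝ) = √(n:ℝ)^2 := (Real.sq_sqrt hn0.le).symm
    nth_rewrite 2 [this]
    have : √(n:ℝ) ≠ 0 := by positivity
    field_simp
  have hdec : meanM n ⌊c * (n:ℝ)⌋₊ n - (n:ℝ)^2 * (1 - Real.exp (-2 * c)) / 4
      = n * (-(1 - p)/4 - n * (p - Real.exp (-2 * c))/4) := by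
    unfold meanM; rw [← hp]; ring
  rw [hdec, ← mul_assoc, hhn, Real.norm_eq_abs, abs_mul, abs_of_nonneg hh.le, mul_comm]
  refine mul_le_mul_of_nonneg_right ?_ hh.le
  have h5 : n * |p - Real.exp (-2 * c)| ≤ 2^2 * c + 2 := by
    calc n * |p - Real.exp (-2 * c)| ≤ n * ((2^2 * c + 2) * (1/n)) := by gcongr
      _ = _ := by field_simp
  have h6 : |(n:ℝ) * (p - Real.exp (-2 * c))| ≤ 2^2 * c + 2 := by
    rw [abs_mul, abs_of_nonneg hn0.le]; exact h5
  rw [abs_le] at h6 ⊢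
  constructor <;> linarith

lemma tendsto_genRec (c : ℝ) (hc : 0 < c) (t : ℝ) :
    Tendsto (fun n : ℕ => genRec n (Complex.exp (Complex.I * ((t * ((√(n:ℝ))⁻¹)^3 : ℝ) : ℂ)))
        ⌊c * (n:ℝ)⌋₊ n
      * Complex.exp (-(Complex.I * ((t * (((√(n:ℝ))⁻¹)^3 * ((n:ℝ)^2 * (1 - Real.exp (-2 * c)) / 4)) : ℝ) : ℂ))))
      atTop (𝓝 (Complex.exp (-((t^2/2 * sigma2 c : ℝ) : ℂ)))) := by
  obtain ⟨C, hC0, hC⟩ := genRec_approx t c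
  set ph : ℕ → ℂ := fun n => Complex.exp (-(Complex.I * ((t * (((√(n:ℝ))⁻¹)^3 *
    ((n:ℝ)^2 * (1 - Real.exp (-2 * c)) / 4)) : ℝ) : ℂ))) with hph
  have hphn : ∀ n, ‖ph n‖ = 1 := by
    intro n
    have : ph n = Complex.exp (((-(t * (((√(n:ℝ))⁻¹)^3 *
      ((n:ℝ)^2 * (1 - Real.exp (-2 * c)) / 4))) : ℝ) : ℂ) * Complex.I) := by
      rw [hph]; simp only; congr 1; push_cast; ring
    rw [this]; exact Complex.norm_exp_ofReal_mul_I _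
  have hmain : Tendsto (fun n : ℕ => Psi t (√(n:ℝ))⁻¹ n ⌊c * (n:ℝ)⌋₊ n * ph n) atTop
      (𝓝 (Complex.exp (-((t^2/2 * sigma2 c : ℝ) : ℂ)))) := by
    have e1 : ∀ n : ℕ, Psi t (√(n:ℝ))⁻¹ n ⌊c * (n:ℝ)⌋₊ n * ph n
        = Complex.exp (Complex.I * ((t * (((√(n:ℝ))⁻¹)^3 * (meanM n ⌊c * (n:ℝ)⌋₊ n
      - (n:ℝ)^2 * (1 - Real.exp (-2 * c)) / 4)) : ℝ) : ℂ)
        - ((t^2/2 * varN n ⌊c * (n:ℝ)⌋₊ n : ℝ) : ℂ)) := by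
      intro n
      rw [hph]; simp only [Psi]
      rw [← Complex.exp_add]; congr 1; push_cast; ring
    simp only [e1]
    have a1 := (tendsto_mean_err c hc).const_mul t
    have a2 := (tendsto_varN c hc).const_mul (t^2/2)
    have b1 := (Complex.continuous_ofReal.tendsto _).comp a1
    have b2 := (Complex.continuous_ofReal.tendsto _).comp a2
    have b3 := (b1.const_mul Complex.I).sub b2
    have b4 := (Complex.continuous_exp.tendsto _).comp b3
    simpa [Function.comp_def] using b4
  have herr : Tendsto (fun n : ℕ => (genRec n (Complex.exp (Complex.I * ((t * ((√(n:ℝ))⁻¹)^3 : ℝ) : ℂ)))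
        ⌊c * (n:ℝ)⌋₊ n - Psi t (√(n:ℝ))⁻¹ n ⌊c * (n:ℝ)⌋₊ n) * ph n) atTop (𝓝 0) := by
    have h0 : Tendsto (fun n : ℕ => (c * C) * (√(n:ℝ))⁻¹) atTop (𝓝 0) := by
      simpa using tendsto_hn.const_mul (c * C)
    refine squeeze_zero_norm' ?_ h0
    filter_upwards [eventually_ge_atTop 2] with n hn
    have hn2 : (2:ℝ) ≤ n := by exact_mod_cast hn
    have hn0 : (0:ℝ) < n := by linarith
    have hs : √(n:ℝ) ≠ 0 := by positivity
    have hs2 : √(n:ℝ)^2 = n := Real.sq_sqrt hn0.le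
    have hh2 : ((√(n:ℝ))⁻¹)^2 * n = 1 := by
      rw [inv_pow, hs2]; field_simp
    have hr1 : (⌊c * (n:ℝ)⌋₊ : ℝ) ≤ c * n := Nat.floor_le (by positivity)
    rw [norm_mul, hphn, mul_one]
    refine (hC n _ hn (by positivity) hh2 _ (by rw [div_le_iff₀ hn0]; exact hr1) n le_rfl).trans ?_
    calc (⌊c * (n:ℝ)⌋₊ : ℝ) * (C * ((√(n:ℝ))⁻¹)^3) ≤ (c * n) * (C * ((√(n:ℝ))⁻¹)^3) := by gcongr
      _ = c * C * (√(n:ℝ))⁻¹ * (((√(n:ℝ))⁻¹)^2 * n) := by ring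
      _ = _ := by rw [hh2, mul_one]
  have := herr.add hmain
  rw [zero_add] at this
  refine this.congr fun n => ?_
  ring

end Analysis

section Probability

/-- The empirical (uniform) law of a real function on a finite type. -/
lemma exists_law {α : Type} [Fintype α] [Nonempty α] (f : α → ℝ) :
    ∃ μ : ProbabilityMeasure ℝ,
      (∀ g : ℝ → ℝ, ∫ x, g x ∂(μ : Measure ℝ) = unifExpect fun a => g (f a)) ∧
      (∀ g : ℝ → ℂ, ∫ x, g x ∂(μ : Measure ℝ) = (∑ a, g (f a)) / (Fintype.card α : ℂ)) := by
  set N : ENNReal := (Fintype.card α : ENNReal) with hN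
  have hN0 : N ≠ 0 := by simp [hN]
  have hNt : N ≠ ⊤ := by simp [hN]
  let ν : Measure ℝ := N⁻¹ • ∑ a : α, Measure.dirac (f a)
  have hν : IsProbabilityMeasure ν := by
    constructor
    simp only [ν, Measure.smul_apply, Measure.finsetSum_apply, measure_univ, Finset.sum_const,
      Finset.card_univ, nsmul_eq_mul, mul_one, smul_eq_mul]
    exact ENNReal.inv_mul_cancel hN0 hNt
  refine ⟨⟨ν, hν⟩, ?_, ?_⟩
  · intro g
    change ∫ x, g x ∂(N⁻¹ • ∑ a : α, Measure.dirac (f a)) = _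
    rw [integral_smul_measure, integral_finsetSum_measure]
    · simp [unifExpect, hN, div_eq_inv_mul]
    · intro a _
      exact integrable_dirac (by simp)
  · intro g
    change ∫ x, g x ∂(N⁻¹ • ∑ a : α, Measure.dirac (f a)) = _
    rw [integral_smul_measure, integral_finsetSum_measure]
    · simp [hN, div_eq_inv_mul]
    · intro a _
      exact integrable_dirac (by simp)

lemma rpow_three_half (n : ℕ) : ((n:ℝ) ^ ((3:ℝ)/2))⁻¹ = ((√(n:ℝ))⁻¹)^3 := by
  rw [inv_pow, Real.sqrt_eq_rpow, ← Real.rpow_natCast, ← Real.rpow_mul (by positivity)]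
  norm_num

end Probability

/-- **Theorem (inversions, critical regime).** For `c > 0` and `r = ⌊cn⌋` iterated
random-to-top shuffles of an `n`-card deck started at the identity,
`(I - n²(1 - e⁻²ᶜ)/4)/n^{3/2}` converges in distribution (tested against every bounded
continuous function) to `N(0, (1 + 8e⁻³ᶜ - 9(1+c)e⁻⁴ᶜ)/36)`. -/
theorem rtt_inversions_critical (c : ℝ) (hc : 0 < c) :
    ∀ g : BoundedContinuousFunction ℝ ℝ,
      Tendsto
        (fun n : ℕ =>
          unifExpect (fun s : Fin ⌊c * (n : ℝ)⌋₊ → Fin n =>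
            g (((inversionCount (rttPerm n ⌊c * (n : ℝ)⌋₊ s) : ℝ) -
                  (n : ℝ) ^ 2 * (1 - Real.exp (-2 * c)) / 4) / (n : ℝ) ^ ((3 : ℝ) / 2))))
        atTop
        (𝓝 (∫ x, g x ∂(gaussianReal 0
          (Real.toNNReal
            ((1 + 8 * Real.exp (-3 * c) - 9 * (1 + c) * Real.exp (-4 * c)) / 36))))) := by
  intro g
  have hne : ∀ N : ℕ, Nonempty (Fin ⌊c * ((N + 2 : ℕ) : ℝ)⌋₊ → Fin (N + 2)) := fun N => inferInstance
  choose μ hμR hμC using fun N : ℕ =>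
    exists_law (fun s : Fin ⌊c * ((N + 2 : ℕ) : ℝ)⌋₊ → Fin (N + 2) =>
      ((inversionCount (rttPerm (N + 2) ⌊c * ((N + 2 : ℕ) : ℝ)⌋₊ s) : ℝ) -
                  ((N + 2 : ℕ) : ℝ) ^ 2 * (1 - Real.exp (-2 * c)) / 4)
                    / ((N + 2 : ℕ) : ℝ) ^ ((3 : ℝ) / 2))
  rw [← tendsto_add_atTop_iff_nat 2]
  let μ₀ : ProbabilityMeasure ℝ := ⟨gaussianReal 0 (Real.toNNReal
            ((1 + 8 * Real.exp (-3 * c) - 9 * (1 + c) * Real.exp (-4 * c)) / 36)), inferInstance⟩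
  have hlim : Tendsto μ atTop (𝓝 μ₀) := by
    refine ProbabilityMeasure.tendsto_of_tendsto_charFun fun t => ?_
    have h1 : charFun (μ₀ : Measure ℝ) t = Complex.exp (-((t^2/2 * sigma2 c : ℝ) : ℂ)) := by
      change charFun (gaussianReal 0 (Real.toNNReal (sigma2 c))) t = _
      rw [charFun_gaussianReal]
      congr 1
      rw [Real.coe_toNNReal _ (sigma2_nonneg c hc)]
      push_cast; ring
    rw [h1]
    refine ((tendsto_add_atTop_iff_nat 2).mpr (tendsto_genRec c hc t)).congr fun N => ?_
    rw [charFun_apply_real, hμC]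
    rw [← unifExpect_cexp (N + 2) (by omega)]
    rw [div_mul_eq_mul_div, Finset.sum_mul]
    congr 1
    · refine Finset.sum_congr rfl fun s _ => ?_
      rw [← Complex.exp_nat_mul, ← Complex.exp_add]
      congr 1
      rw [div_eq_mul_inv _ (((N + 2 : ℕ) : ℝ) ^ ((3 : ℝ) / 2)), rpow_three_half]
      push_cast
      ring
    · simp
  have h2 := (ProbabilityMeasure.tendsto_iff_forall_integral_tendsto.mp hlim) g
  refine h2.congr fun N => ?_
  rw [hμR]
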